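/- Let K be an algebraically closed field of characteristic zero, let G be an n×n matrix over K with exactly m distinct eigenvalues λ_1, …, λ_m, and let P_spec(X) = ∏_{i=1}^{m} (X − λ_i) be its spectral polynomial. Then for every λ ∈ K, det M_{m,1}(λI − G) = det M_m(G) · P_spec(λ); equivalently, P_spec(λ) = det M_{m,1}(λI − G) / det M_m(G). -/

import Mathlib

/-!
By the spectral mapping theorem for multisets of eigenvalues, `tr p(G) = ∑ c_μ p(μ)`, the sum being
over the distinct eigenvalues `μ` of `G` with their multiplicities `c_μ`. Hence `M_{m,l}(p(G))`
factors as `Vᵀ D V`, with `V` the square Vandermonde matrix of the values `p(μ)` and `D` the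
diagonal matrix of the `c_μ p(μ)^l`, so its determinant is `(∏ c_μ) (∏ p(μ))^l (det V)²`.
Replacing `G` by `λI - G` leaves `(∏ c_μ) (det V)²` unchanged, and only the factor
`(∏ (λ - μ))^l = P_spec(λ)^l` is new.
-/

open Polynomial Matrix

section SpectralMapping

variable {R K ι : Type*} [CommRing R] [IsDomain R] [Field K] [IsAlgClosed K]
  [Fintype ι] [DecidableEq ι]

theorem card_roots_charpoly_of_splits {G : Matrix ι ι R} (hG : G.charpoly.Splits) :
    G.charpoly.roots.card = Fintype.card ι := by
  rw [← hG.natDegree_eq_card_roots, G.charpoly_natDegree_eq_dim]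

theorem det_add_scalar_eq_prod_roots_charpoly {G : Matrix ι ι R} (hG : G.charpoly.Splits) (a : R) :
    (G + scalar ι a).det = (G.charpoly.roots.map (· + a)).prod := by
  have hneg : G + scalar ι a = -(scalar ι (-a) - G) := by
    rw [map_neg, neg_sub, sub_neg_eq_add]
  rw [hneg, det_neg, ← eval_charpoly, hG.eval_eq_prod_roots_of_monic G.charpoly_monic,
    ← card_roots_charpoly_of_splits hG, ← Multiset.card_map (-a - ·), ← Multiset.prod_map_neg,
    Multiset.map_map]
  simp [add_comm]

theorem det_aeval_eq_prod_roots_charpoly {G : Matrix ι ι R} (hG : G.charpoly.Splits)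
    {p : R[X]} (hp : p.Splits) :
    (aeval G p).det = (G.charpoly.roots.map (p.eval ·)).prod := by
  induction hp using Submonoid.closure_induction with
  | mem q hq =>
    obtain ⟨a, rfl⟩ | ⟨a, rfl⟩ := hq
    · simp [algebraMap_eq_diagonal, Pi.algebraMap_def, card_roots_charpoly_of_splits hG]
    · simpa [algebraMap_eq_diagonal, Pi.algebraMap_def] using
        det_add_scalar_eq_prod_roots_charpoly hG a
  | one => simp
  | mul q r _ _ hq hr => simp [hq, hr, Multiset.prod_map_mul]

theorem charpoly_aeval_eq_prod_roots_charpoly (G : Matrix ι ι K) (p : K[X]) :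
    (aeval G p).charpoly = (G.charpoly.roots.map fun μ => X - C (p.eval μ)).prod := by
  refine Polynomial.funext fun x => ?_
  have hsub : scalar ι x - aeval G p = aeval G (C x - p) := by
    simp [algebraMap_eq_diagonal, Pi.algebraMap_def]
  rw [eval_charpoly, hsub, det_aeval_eq_prod_roots_charpoly (IsAlgClosed.splits _)
    (IsAlgClosed.splits _), eval_multiset_prod, Multiset.map_map]
  simp

theorem charpoly_aeval_eq_prod_roots_charpoly_of_splits {G : Matrix ι ι R}
    (hG : G.charpoly.Splits) (p : R[X]) :
    (aeval G p).charpoly = (G.charpoly.roots.map fun μ => X - C (p.eval μ)).prod := by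
  -- Over `R` the polynomials `C x - p` need not split, so descend from an algebraic closure.
  let φ : R →+* AlgebraicClosure (FractionRing R) :=
    (algebraMap (FractionRing R) _).comp (algebraMap R (FractionRing R))
  have hφ : Function.Injective φ :=
    (algebraMap (FractionRing R) _).injective.comp (IsFractionRing.injective R (FractionRing R))
  have haeval : (aeval G p).map φ = aeval (G.map φ) (p.map φ) :=
    map_aeval_eq_aeval_map (ψ := φ.mapMatrix)
      (by ext; simp [algebraMap_matrix_apply, apply_ite φ]) p G
  refine Polynomial.map_injective φ hφ ?_
  rw [← charpoly_map, haeval, charpoly_aeval_eq_prod_roots_charpoly, charpoly_map,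
    hG.roots_map_of_injective hφ, Polynomial.map_multiset_prod]
  simp [Multiset.map_map]

theorem trace_aeval_eq_sum_roots_charpoly_of_splits {G : Matrix ι ι R} (hG : G.charpoly.Splits)
    (p : R[X]) : (aeval G p).trace = (G.charpoly.roots.map (p.eval ·)).sum := by
  have hcharpoly : (aeval G p).charpoly =
      ((G.charpoly.roots.map (p.eval ·)).map (X - C ·)).prod := by
    rw [charpoly_aeval_eq_prod_roots_charpoly_of_splits hG, Multiset.map_map]
    rfl
  have hsplits : (aeval G p).charpoly.Splits := by
    rw [hcharpoly]
    exact .multisetProd fun q hq => by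
      obtain ⟨a, -, rfl⟩ := Multiset.mem_map.mp hq
      exact .X_sub_C a
  rw [trace_eq_sum_roots_charpoly_of_splits hsplits, hcharpoly, roots_multiset_prod_X_sub_C]

end SpectralMapping

section Vandermonde

variable {R : Type*} [CommRing R] {m : ℕ}

theorem det_of_sum_mul_pow_add (c v : Fin m → R) :
    (of fun i j : Fin m => ∑ k, c k * v k ^ (i.1 + j.1)).det =
      (∏ k, c k) * (vandermonde v).det ^ 2 := by
  have hfactor : (of fun i j : Fin m => ∑ k, c k * v k ^ (i.1 + j.1)) =
      (vandermonde v)ᵀ * diagonal c * vandermonde v := by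
    ext i j
    rw [of_apply, mul_apply]
    simp only [mul_diagonal, transpose_apply, vandermonde_apply]
    exact Finset.sum_congr rfl fun k _ => by ring
  rw [hfactor, det_mul, det_mul, det_transpose, det_diagonal]
  ring

theorem det_vandermonde_const_sub_sq (a : R) (v : Fin m → R) :
    (vandermonde fun k => a - v k).det ^ 2 = (vandermonde v).det ^ 2 := by
  simp only [det_vandermonde, ← Finset.prod_pow]
  exact Finset.prod_congr rfl fun i _ => Finset.prod_congr rfl fun j _ => by ring

end Vandermonde

section TraceHankel

variable {R ι : Type*} [CommRing R] [Fintype ι] [DecidableEq ι]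

/-- The matrix `M_{t,l}(G)` of traces of powers of `G`. The exponent is `i + j + l`, rather than
`i + j + l - 2`, because indices start at `0`. -/
def traceHankel (t l : ℕ) (G : Matrix ι ι R) : Matrix (Fin t) (Fin t) R :=
  of fun i j => (G ^ (i.1 + j.1 + l)).trace

variable [IsDomain R] [DecidableEq R]

/-- The spectral polynomial `P_spec` of `G`: its roots are those of the characteristic polynomial
lying in `R`, each taken once. -/
noncomputable def spectralPolynomial (G : Matrix ι ι R) : R[X] :=
  ∏ μ ∈ G.charpoly.roots.toFinset, (X - C μ)

variable {G : Matrix ι ι R} {m : ℕ}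

theorem eval_spectralPolynomial (G : Matrix ι ι R) (a : R) :
    (spectralPolynomial G).eval a = ∏ μ ∈ G.charpoly.roots.toFinset, (a - μ) := by
  simp [spectralPolynomial, eval_prod]

theorem trace_aeval_eq_sum_count_roots_charpoly (hG : G.charpoly.Splits) (p : R[X]) :
    (aeval G p).trace =
      ∑ μ ∈ G.charpoly.roots.toFinset, (G.charpoly.roots.count μ : R) * p.eval μ := by
  simp only [trace_aeval_eq_sum_roots_charpoly_of_splits hG, Finset.sum_multiset_map_count,
    nsmul_eq_mul]

theorem det_traceHankel_aeval (hG : G.charpoly.Splits) (e : Fin m ≃ G.charpoly.roots.toFinset)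
    (l : ℕ) (p : R[X]) :
    (traceHankel m l (aeval G p)).det =
      (∏ k, (G.charpoly.roots.count (e k : R) : R)) * (∏ k, p.eval (e k : R)) ^ l *
        (vandermonde fun k => p.eval (e k : R)).det ^ 2 := by
  have hentries : traceHankel m l (aeval G p) = of fun i j : Fin m =>
      ∑ k, G.charpoly.roots.count (e k : R) * p.eval (e k : R) ^ l *
        p.eval (e k : R) ^ (i.1 + j.1) := by
    ext i j
    rw [traceHankel, of_apply, of_apply, ← map_pow, trace_aeval_eq_sum_count_roots_charpoly hG,
      ← Finset.sum_coe_sort, ← e.sum_comp]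
    exact Finset.sum_congr rfl fun k _ => by rw [eval_pow]; ring
  rw [hentries, det_of_sum_mul_pow_add, Finset.prod_mul_distrib, Finset.prod_pow]

theorem det_M_shift_eq_det_M_mul_spec_general (hG : G.charpoly.Splits)
    (hm : G.charpoly.roots.toFinset.card = m) (l : ℕ) (a : R) :
    (traceHankel m l (a • (1 : Matrix ι ι R) - G)).det =
      (traceHankel m 0 G).det * (spectralPolynomial G).eval a ^ l := by
  have e : Fin m ≃ G.charpoly.roots.toFinset := (Finset.equivFinOfCardEq hm).symm
  have hspec : (spectralPolynomial G).eval a = ∏ k, (a - (e k : R)) := by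
    rw [eval_spectralPolynomial, ← Finset.prod_coe_sort, ← e.prod_comp]
  have hshift := det_traceHankel_aeval hG e l (C a - X)
  have hself := det_traceHankel_aeval hG e 0 X
  simp only [map_sub, aeval_C, aeval_X, Algebra.algebraMap_eq_smul_one, eval_sub, eval_C, eval_X,
    pow_zero, mul_one, det_vandermonde_const_sub_sq] at hshift hself
  rw [hshift, hself, hspec]
  ring

end TraceHankel

/-- Over an algebraically closed field of characteristic zero, let `G`
have exactly `m` distinct eigenvalues (the distinct roots of its characteristic
polynomial) and let `P_spec(X) = ∏ (X - λᵢ)` be its spectral polynomial.  Then for every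
`λ ∈ K`, `det M_{m,1}(λI - G) = det M_m(G) · P_spec(λ)`.  Here the `(i,j)` entry of
`M_{t,l}(A)` (`0`-based) is `tr A^{i+j+l}` and `M_t := M_{t,0}`. -/
theorem det_M_shift_eq_det_M_mul_spec {K : Type*} [Field K] [IsAlgClosed K]
    [CharZero K] [DecidableEq K] {n m : ℕ} (G : Matrix (Fin n) (Fin n) K)
    (hm : G.charpoly.roots.toFinset.card = m) (lam : K) :
    (Matrix.of fun i j : Fin m =>
        ((lam • (1 : Matrix (Fin n) (Fin n) K) - G) ^ (i.1 + j.1 + 1)).trace).det =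
      (Matrix.of fun i j : Fin m => (G ^ (i.1 + j.1)).trace).det *
        ∏ μ ∈ G.charpoly.roots.toFinset, (lam - μ) := by
  rw [← eval_spectralPolynomial, ← pow_one ((spectralPolynomial G).eval lam)]
  exact det_M_shift_eq_det_M_mul_spec_general (IsAlgClosed.splits _) hm 1 lam
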